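/- The group algebra of the symmetric group S_n over a field of characteristic zero is isomorphic (as a k-algebra) to a finite direct product of matrix algebras over k, one for each partition of n. -/

import Mathlib

/-!
Two isomorphic algebras have centers of the same dimension. The center of a
finite product of central algebras has dimension the number of factors, and the center of the
group algebra of a finite group consists of the functions constant on conjugacy classes. So the
Wedderburn–Artin decomposition of `k[G]` has one matrix block for each conjugacy class of `G`;
for a symmetric group the conjugacy classes are the cycle shapes, that is, the partitions of `n`.
-/

open scoped Nat

section Center

variable {R : Type*} [CommSemiring R]

/-- The isomorphism between the centers of two isomorphic algebras; the version of
`Subring.centerCongr` for algebras. -/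
def algebraCenterCongr {A B : Type*} [Semiring A] [Algebra R A] [Semiring B] [Algebra R B]
    (e : A ≃ₐ[R] B) : Subalgebra.center R A ≃ₐ[R] Subalgebra.center R B where
  __ := Subsemiring.centerCongr e.toRingEquiv
  commutes' r := Subtype.ext (e.commutes r)

variable {ι : Type*} {A : ι → Type*} [∀ i, Semiring (A i)] [∀ i, Algebra R (A i)]

lemma mem_center_pi_iff_exists_algebraMap [∀ i, Algebra.IsCentral R (A i)] {z : Π i, A i} :
    z ∈ Subalgebra.center R (Π i, A i) ↔ ∃ c : ι → R, ∀ i, z i = algebraMap R (A i) (c i) := by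
  simp only [Subalgebra.center_pi, Subalgebra.mem_pi, Set.mem_univ, forall_const,
    Algebra.IsCentral.mem_center_iff]
  exact Classical.skolem

variable (R A) in
/-- The identification of `ι → R` with the center of a product, indexed by `ι`, of central
`R`-algebras, sending a family of scalars to the corresponding family of scalar elements. -/
noncomputable def piEquivCenterPi [∀ i, Algebra.IsCentral R (A i)] [∀ i, FaithfulSMul R (A i)] :
    (ι → R) ≃ₗ[R] Subalgebra.center R (Π i, A i) :=
  LinearEquiv.ofBijective
    ((LinearMap.piMap fun i => Algebra.linearMap R (A i)).codRestrict
      (Subalgebra.center R (Π i, A i)).toSubmodule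
      fun c => mem_center_pi_iff_exists_algebraMap.2 ⟨c, fun _ => rfl⟩)
    ⟨fun _ _ h => funext fun i =>
        FaithfulSMul.algebraMap_injective R (A i) (congrFun (congrArg Subtype.val h) i),
      fun z => (mem_center_pi_iff_exists_algebraMap.1 z.2).imp
        fun _ hc => Subtype.ext (funext fun i => (hc i).symm)⟩

end Center

section GroupAlgebra

open scoped MonoidAlgebra

variable {R G : Type*} [CommSemiring R] [Group G]

lemma mem_center_monoidAlgebra_iff_forall_isConj {x : R[G]} :
    x ∈ Subalgebra.center R R[G] ↔ ∀ g h, IsConj g h → x.coeff g = x.coeff h := by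
  rw [Subalgebra.mem_center_iff]
  constructor
  · intro hx g h hgh
    obtain ⟨c, rfl⟩ := isConj_iff.1 hgh
    simpa [MonoidAlgebra.coeff_mul_single_apply, MonoidAlgebra.coeff_single_mul_apply]
      using congrArg (fun y : R[G] => y.coeff (c * g)) (hx (.single c 1))
  · intro hx y
    induction y using MonoidAlgebra.induction_linear with
    | zero => simp
    | add y z hy hz => rw [add_mul, mul_add, hy, hz]
    | single g r =>
      ext h
      have hconj : IsConj (g⁻¹ * h) (h * g⁻¹) := isConj_iff.2 ⟨g, by group⟩
      rw [MonoidAlgebra.coeff_mul_single_apply, MonoidAlgebra.coeff_single_mul_apply,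
        hx _ _ hconj, mul_comm]

variable (R G) in
/-- The identification of the center of the group algebra of a finite group with the space of
class functions, encoded as functions on the set of conjugacy classes. -/
noncomputable def centerMonoidAlgebraEquiv [Finite G] :
    Subalgebra.center R R[G] ≃ₗ[R] (ConjClasses G → R) where
  toFun x := Quotient.lift x.1.coeff (mem_center_monoidAlgebra_iff_forall_isConj.1 x.2)
  map_add' x y := by ext ⟨g⟩; rfl
  map_smul' r x := by ext ⟨g⟩; rfl
  invFun f := ⟨.ofCoeff (Finsupp.equivFunOnFinite.symm fun g => f (ConjClasses.mk g)),
    mem_center_monoidAlgebra_iff_forall_isConj.2 fun _ _ h =>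
      congrArg f (ConjClasses.mk_eq_mk_iff_isConj.2 h)⟩
  left_inv x := by ext g; rfl
  right_inv f := by ext ⟨g⟩; rfl

lemma nonempty_equiv_conjClasses_of_algEquiv_pi [InvariantBasisNumber R] [Finite G]
    {ι : Type*} [Finite ι] {A : ι → Type*} [∀ i, Semiring (A i)] [∀ i, Algebra R (A i)]
    [∀ i, Algebra.IsCentral R (A i)] [∀ i, FaithfulSMul R (A i)] (e : R[G] ≃ₐ[R] Π i, A i) :
    Nonempty (ι ≃ ConjClasses G) :=
  let centers : (ι → R) ≃ₗ[R] (ConjClasses G → R) :=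
    piEquivCenterPi R A ≪≫ₗ (algebraCenterCongr e).symm.toLinearEquiv ≪≫ₗ
      centerMonoidAlgebraEquiv R G
  ⟨((Pi.basisFun R ι).map centers).indexEquiv (Pi.basisFun R (ConjClasses G))⟩

theorem exists_algEquiv_pi_conjClasses_matrix (k G : Type*) [Field k] [IsAlgClosed k] [Group G]
    [Finite G] [NeZero (Nat.card G : k)] :
    ∃ d : ConjClasses G → ℕ, (∀ C, NeZero (d C)) ∧
      Nonempty (k[G] ≃ₐ[k] Π C, Matrix (Fin (d C)) (Fin (d C)) k) := by
  obtain ⟨m, d, hd, ⟨e⟩⟩ := IsSemisimpleRing.exists_algEquiv_pi_matrix_of_isAlgClosed k k[G]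
  obtain ⟨blocks⟩ := nonempty_equiv_conjClasses_of_algEquiv_pi e
  exact ⟨d ∘ blocks.symm, fun C => hd (blocks.symm C),
    ⟨e.trans (.piCongrLeft' k (fun i => Matrix (Fin (d i)) (Fin (d i)) k) blocks)⟩⟩

end GroupAlgebra

section CycleShape

lemma parts_eq_filter_two_le_add_replicate {n : ℕ} (p : n.Partition) :
    p.parts = p.parts.filter (2 ≤ ·) + .replicate (n - (p.parts.filter (2 ≤ ·)).sum) 1 := by
  obtain ⟨m, hm⟩ : ∃ m, p.parts.filter (¬ 2 ≤ ·) = .replicate m 1 := by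
    refine ⟨_, Multiset.eq_replicate.2 ⟨rfl, fun i hi => ?_⟩⟩
    obtain ⟨hmem, hlt⟩ := Multiset.mem_filter.1 hi
    have hpos := p.parts_pos hmem
    omega
  have hsplit := Multiset.filter_add_not (2 ≤ ·) p.parts
  have hsum := congrArg Multiset.sum hsplit
  rw [hm, Multiset.sum_add, Multiset.sum_replicate, smul_eq_mul, mul_one, p.parts_sum] at hsum
  rw [Nat.sub_eq_of_eq_add' hsum.symm, ← hm, hsplit]

variable {α : Type*} [Fintype α] [DecidableEq α]

lemma exists_perm_partition_eq (p : (Fintype.card α).Partition) :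
    ∃ σ : Equiv.Perm α, σ.partition = p := by
  have hle : (p.parts.filter (2 ≤ ·)).sum ≤ Fintype.card α :=
    calc (p.parts.filter (2 ≤ ·)).sum
        ≤ (p.parts.filter (2 ≤ ·)).sum + (p.parts.filter (¬ 2 ≤ ·)).sum := le_self_add
      _ = Fintype.card α := by rw [← Multiset.sum_add, Multiset.filter_add_not, p.parts_sum]
  obtain ⟨σ, hσ⟩ := (Equiv.Perm.exists_with_cycleType_iff α).2
    ⟨hle, fun i hi => (Multiset.mem_filter.1 hi).2⟩
  refine ⟨σ, Nat.Partition.ext ?_⟩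
  rw [Equiv.Perm.parts_partition, ← Equiv.Perm.sum_cycleType, hσ,
    ← parts_eq_filter_two_le_add_replicate]

variable (α) in
/-- The correspondence between conjugacy classes of permutations of `α` and partitions of the
cardinality of `α`, sending a permutation to its cycle shape, fixed points included. -/
noncomputable def conjClassesPermEquivPartition :
    ConjClasses (Equiv.Perm α) ≃ (Fintype.card α).Partition :=
  .ofBijective
    (Quotient.lift Equiv.Perm.partition fun _ _ => Equiv.Perm.partition_eq_of_isConj.1)
    ⟨by
      rintro ⟨σ⟩ ⟨τ⟩ h
      exact Quotient.sound (Equiv.Perm.partition_eq_of_isConj.2 h),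
    fun p => (exists_perm_partition_eq p).elim fun σ hσ => ⟨ConjClasses.mk σ, hσ⟩⟩

end CycleShape

section YoungDiagram

lemma sum_rowLens_eq_card (μ : YoungDiagram) : μ.rowLens.sum = μ.card := by
  have hrow : ∀ c ∈ μ.cells, c.1 ∈ Finset.range (μ.colLen 0) := fun ⟨i, j⟩ hc =>
    Finset.mem_range.2 (YoungDiagram.mem_iff_lt_colLen.1 (μ.up_left_mem le_rfl j.zero_le hc))
  calc μ.rowLens.sum = ∑ i ∈ Finset.range (μ.colLen 0), μ.rowLen i := rfl
    _ = ∑ i ∈ Finset.range (μ.colLen 0), (μ.row i).card := by simp_rw [μ.rowLen_eq_card]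
    _ = μ.card := (Finset.card_eq_sum_card_fiberwise hrow).symm

lemma rowLens_ofRowLens_sort_parts {n : ℕ} (p : n.Partition) :
    (YoungDiagram.ofRowLens (p.parts.sort (· ≥ ·))
      (p.parts.pairwise_sort (· ≥ ·)).sortedGE).rowLens = p.parts.sort (· ≥ ·) :=
  YoungDiagram.rowLens_ofRowLens_eq_self fun _ hi => p.parts_pos ((Multiset.mem_sort _).1 hi)

/-- The correspondence between Young diagrams with `n` cells and partitions of `n`, sending a
diagram to its multiset of row lengths. -/
def youngDiagramEquivPartition (n : ℕ) : {μ : YoungDiagram // μ.card = n} ≃ n.Partition where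
  toFun μ :=
    { parts := μ.1.rowLens
      parts_pos := μ.1.pos_of_mem_rowLens _
      parts_sum := by rw [Multiset.sum_coe, sum_rowLens_eq_card, μ.2] }
  invFun p :=
    { val := .ofRowLens (p.parts.sort (· ≥ ·)) (p.parts.pairwise_sort (· ≥ ·)).sortedGE
      property := by
        rw [← sum_rowLens_eq_card, rowLens_ofRowLens_sort_parts, ← Multiset.sum_coe,
          Multiset.sort_eq, p.parts_sum] }
  left_inv μ := by
    have hsort : (μ.1.rowLens : Multiset ℕ).sort (· ≥ ·) = μ.1.rowLens :=
      List.mergeSort_eq_self _ μ.1.rowLens_sorted.pairwise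
    simp only [hsort, YoungDiagram.ofRowLens_to_rowLens_eq_self]
  right_inv p := by
    ext1
    simp only [rowLens_ofRowLens_sort_parts, Multiset.sort_eq]

end YoungDiagram

theorem groupAlgebra_symmetricGroup_iso_prod_matrix_general
    (k α : Type*) [Field k] [IsAlgClosed k] [Fintype α] [NeZero ((Fintype.card α)! : k)] :
    ∃ h : {μ : YoungDiagram // μ.card = Fintype.card α} → ℕ, (∀ μ, NeZero (h μ)) ∧
      Nonempty (MonoidAlgebra k (Equiv.Perm α) ≃ₐ[k] Π μ, Matrix (Fin (h μ)) (Fin (h μ)) k) := by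
  classical
  have : NeZero (Nat.card (Equiv.Perm α) : k) := by
    rwa [Nat.card_perm, Nat.card_eq_fintype_card]
  obtain ⟨d, hd, ⟨e⟩⟩ := exists_algEquiv_pi_conjClasses_matrix k (Equiv.Perm α)
  let shape := (conjClassesPermEquivPartition α).trans (youngDiagramEquivPartition _).symm
  exact ⟨d ∘ shape.symm, fun μ => hd (shape.symm μ),
    ⟨e.trans (.piCongrLeft' k (fun C => Matrix (Fin (d C)) (Fin (d C)) k) shape)⟩⟩

/-- The group algebra of `S_n` over a field of characteristic zero is isomorphic, as a
`k`-algebra, to a finite direct product of matrix algebras over `k`, one for each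
partition of `n` (partitions being encoded as Young diagrams with `n` cells). -/
theorem groupAlgebra_symmetricGroup_iso_prod_matrix
    (k : Type) [Field k] [CharZero k] [IsAlgClosed k] (n : ℕ) :
    ∃ h : {μ : YoungDiagram // μ.card = n} → ℕ,
      Nonempty (MonoidAlgebra k (Equiv.Perm (Fin n)) ≃ₐ[k]
        Π μ : {μ : YoungDiagram // μ.card = n}, Matrix (Fin (h μ)) (Fin (h μ)) k) := by
  have : NeZero ((Fintype.card (Fin n))! : k) := ⟨Nat.cast_ne_zero.2 (Nat.factorial_ne_zero _)⟩
  obtain ⟨h, -, e⟩ :=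
    Fintype.card_fin n ▸ groupAlgebra_symmetricGroup_iso_prod_matrix_general k (Fin n)
  exact ⟨h, e⟩
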